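/- The following are equivalent: (i) M_F is path connected; (ii) M_F is connected; (iii) every A ∈ 𝒜_> can be written as a union of finitely many μ-atoms. -/

import Mathlib

open MeasureTheory Topology Set Pointwise

/-- The set of all real-valued measurable functions on `X`, as a subtype. -/
abbrev Mble (X : Type*) [MeasurableSpace X] : Type _ := {f : X → ℝ // Measurable f}

/-- The basic set `B(f, A, ε)`: all `g` such that for some measurable null set `N`,
`sup_{x ∈ A \ N} |f x - g x| < ε`. -/
def FBall {X : Type*} [MeasurableSpace X] (μ : Measure X) (f : Mble X) (A : Set X)
    (ε : ℝ) : Set (Mble X) :=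
  {g | ∃ N : Set X, MeasurableSet N ∧ μ N = 0 ∧
        ∃ b : ℝ, b < ε ∧ ∀ x ∈ A \ N, |f.1 x - g.1 x| ≤ b}

/-- The `F_μ`-topology on `Mble X`, generated by the sets `B(f, A, ε)` with
`A` measurable of finite measure and `ε > 0`. -/
def FTop {X : Type*} [MeasurableSpace X] (μ : Measure X) : TopologicalSpace (Mble X) :=
  TopologicalSpace.generateFrom
    {S | ∃ (f : Mble X) (A : Set X) (ε : ℝ),
        MeasurableSet A ∧ μ A < ⊤ ∧ 0 < ε ∧ S = FBall μ f A ε}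

/-- A `μ`-atom: a measurable set of positive measure admitting no decomposition into two
disjoint measurable pieces of positive measure. -/
def MuAtom {X : Type*} [MeasurableSpace X] (μ : Measure X) (A : Set X) : Prop :=
  MeasurableSet A ∧ 0 < μ A ∧
    ¬ ∃ B C : Set X, MeasurableSet B ∧ MeasurableSet C ∧ Disjoint B C ∧
        B ∪ C = A ∧ 0 < μ B ∧ 0 < μ C

/-- `G` is a union of finitely many `μ`-atoms. -/
def FinAtomUnion {X : Type*} [MeasurableSpace X] (μ : Measure X) (G : Set X) : Prop :=
  ∃ (n : ℕ) (F : Fin n → Set X), (∀ i, MuAtom μ (F i)) ∧ G = ⋃ i, F i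

/-- `L^∞_G`: the measurable functions that are essentially bounded on `G`. -/
def Linf {X : Type*} [MeasurableSpace X] (μ : Measure X) (G : Set X) : Set (Mble X) :=
  {f | ∃ M₀ : ℝ, 0 < M₀ ∧ ∃ N : Set X, MeasurableSet N ∧ μ N = 0 ∧
        ∀ x ∈ G \ N, |f.1 x| ≤ M₀}

/-- The intersection `⋂_{G ∈ 𝒜_>} L^∞_G`. -/
def InterLinf {X : Type*} [MeasurableSpace X] (μ : Measure X) : Set (Mble X) :=
  ⋂ G ∈ {A : Set X | MeasurableSet A ∧ 0 < μ A ∧ μ A < ⊤}, Linf μ G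

/-- The zero function as an element of `Mble X`. -/
def zeroM {X : Type*} [MeasurableSpace X] : Mble X := ⟨fun _ => 0, measurable_const⟩

/-- `μ` is hemifinite: some sequence in `𝒜_>` almost contains every member of `𝒜_>`. -/
def Hemifinite {X : Type*} [MeasurableSpace X] (μ : Measure X) : Prop :=
  ∃ A : ℕ → Set X, (∀ n, MeasurableSet (A n) ∧ 0 < μ (A n) ∧ μ (A n) < ⊤) ∧
    ∀ F : Set X, MeasurableSet F → 0 < μ F → μ F < ⊤ → ∃ n, μ (F \ A n) = 0

/-- `G⁺`: functions strictly positive μ-almost everywhere on `G`. -/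
def Gplus {X : Type*} [MeasurableSpace X] (μ : Measure X) (G : Set X) : Set (Mble X) :=
  {f | ∃ N : Set X, MeasurableSet N ∧ μ N = 0 ∧ ∀ x ∈ G \ N, 0 < f.1 x}

/-- `G⁰`: functions nonnegative μ-almost everywhere on `G`. -/
def Gzero {X : Type*} [MeasurableSpace X] (μ : Measure X) (G : Set X) : Set (Mble X) :=
  {f | ∃ N : Set X, MeasurableSet N ∧ μ N = 0 ∧ ∀ x ∈ G \ N, 0 ≤ f.1 x}

instance {X : Type*} [MeasurableSpace X] : Add (Mble X) :=
  ⟨fun f g => ⟨f.1 + g.1, f.2.add g.2⟩⟩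

/-!
For `A` of finite measure, the functions essentially bounded on `A` form a clopen set of `M_F`,
since a uniform perturbation on `A` does not affect boundedness there. So if `M_F` is connected,
then every measurable function is essentially bounded on every such `A`. A non-null `A` has that
property exactly when it is a finite union of atoms: a measurable function is essentially bounded
on each atom, and a set that is not a finite union of atoms can be split forever, producing
infinitely many disjoint non-null pieces and a function equal to `n` on the `n`-th one. Conversely,
if `g - f` is essentially bounded on every set of finite measure, then the segment from `f` to `g`
is continuous for the `F_μ`-topology.
-/

section

open scoped Function

variable {X : Type*} [MeasurableSpace X] {μ : Measure X} {A B : Set X} {f g : Mble X} {ε : ℝ}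

theorem exists_null_forall_mem_sdiff_iff_ae {p : X → Prop} :
    (∃ N, MeasurableSet N ∧ μ N = 0 ∧ ∀ x ∈ A \ N, p x) ↔ ∀ᵐ x ∂μ, x ∈ A → p x := by
  constructor
  · rintro ⟨N, -, hN, h⟩
    filter_upwards [measure_eq_zero_iff_ae_notMem.1 hN] with x hxN hxA using h x ⟨hxA, hxN⟩
  · intro h
    obtain ⟨N, hsub, hN, hN0⟩ := exists_measurable_superset_of_null (ae_iff.1 h)
    exact ⟨N, hN, hN0, fun x hx => by_contra fun hp => hx.2 (hsub fun hxp => hp (hxp hx.1))⟩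

theorem mem_linf_iff : f ∈ Linf μ A ↔ ∃ M, ∀ᵐ x ∂μ, x ∈ A → |f.1 x| ≤ M := by
  simp only [Linf, mem_ofPred_eq, exists_null_forall_mem_sdiff_iff_ae]
  refine ⟨fun ⟨M, _, hM⟩ => ⟨M, hM⟩, fun ⟨M, hM⟩ => ⟨max M 1, by positivity, ?_⟩⟩
  filter_upwards [hM] with x hx hxA using (hx hxA).trans (le_max_left M 1)

theorem mem_fBall_iff : g ∈ FBall μ f A ε ↔ ∃ b < ε, ∀ᵐ x ∂μ, x ∈ A → |f.1 x - g.1 x| ≤ b := by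
  simp only [← exists_null_forall_mem_sdiff_iff_ae]
  exact ⟨fun ⟨N, hN, hN0, b, hb, h⟩ => ⟨b, hb, N, hN, hN0, h⟩,
    fun ⟨b, hb, N, hN, hN0, h⟩ => ⟨N, hN, hN0, b, hb, h⟩⟩

theorem mem_linf_of_measure_eq_zero (hA : μ A = 0) (f : Mble X) : f ∈ Linf μ A := by
  refine mem_linf_iff.2 ⟨0, ?_⟩
  filter_upwards [measure_eq_zero_iff_ae_notMem.1 hA] with x hx hxA using absurd hxA hx

theorem mem_linf_iUnion {ι : Type*} [Finite ι] {F : ι → Set X} (h : ∀ i, f ∈ Linf μ (F i)) :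
    f ∈ Linf μ (⋃ i, F i) := by
  choose M hM using fun i => mem_linf_iff.1 (h i)
  obtain ⟨K, hK⟩ := (finite_range M).bddAbove
  refine mem_linf_iff.2 ⟨K, ?_⟩
  filter_upwards [ae_all_iff.2 hM] with x hx hxF
  obtain ⟨i, hi⟩ := mem_iUnion.1 hxF
  exact (hx i hi).trans (hK (mem_range_self i))

theorem MuAtom.measure_inter_eq_zero_or_measure_sdiff_eq_zero (hA : MuAtom μ A)
    (hB : MeasurableSet B) : μ (A ∩ B) = 0 ∨ μ (A \ B) = 0 := by
  by_contra! h
  exact hA.2.2 ⟨A ∩ B, A \ B, hA.1.inter hB, hA.1.diff hB, disjoint_inf_sdiff,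
    inter_union_sdiff A B, pos_iff_ne_zero.2 h.1, pos_iff_ne_zero.2 h.2⟩

theorem MuAtom.mem_linf (hA : MuAtom μ A) (f : Mble X) : f ∈ Linf μ A := by
  have hmeas (n : ℕ) : MeasurableSet {x | |f.1 x| ≤ n} :=
    measurableSet_le f.2.abs measurable_const
  have hcover : ⋃ n : ℕ, A ∩ {x | |f.1 x| ≤ n} = A := by
    rw [← inter_iUnion, inter_eq_left]
    exact fun x _ => mem_iUnion.2 (exists_nat_ge |f.1 x|)
  obtain ⟨n, hn⟩ : ∃ n : ℕ, 0 < μ (A ∩ {x | |f.1 x| ≤ n}) :=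
    exists_measure_pos_of_not_measure_iUnion_null (by rw [hcover]; exact hA.2.1.ne')
  have hnull : μ (A \ {x | |f.1 x| ≤ n}) = 0 :=
    (hA.measure_inter_eq_zero_or_measure_sdiff_eq_zero (hmeas n)).resolve_left hn.ne'
  refine mem_linf_iff.2 ⟨n, ?_⟩
  filter_upwards [measure_eq_zero_iff_ae_notMem.1 hnull] with x hx hxA
  exact not_not.1 fun hlt => hx ⟨hxA, hlt⟩

theorem FinAtomUnion.mem_linf (hA : FinAtomUnion μ A) (f : Mble X) : f ∈ Linf μ A := by
  obtain ⟨n, F, hF, rfl⟩ := hA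
  exact mem_linf_iUnion fun i => (hF i).mem_linf f

theorem MuAtom.finAtomUnion (hA : MuAtom μ A) : FinAtomUnion μ A :=
  ⟨1, fun _ => A, fun _ => hA, (iUnion_const A).symm⟩

theorem FinAtomUnion.union (hA : FinAtomUnion μ A) (hB : FinAtomUnion μ B) :
    FinAtomUnion μ (A ∪ B) := by
  obtain ⟨m, F, hF, rfl⟩ := hA
  obtain ⟨n, G, hG, rfl⟩ := hB
  refine ⟨m + n, Fin.append F G, Fin.addCases (by simpa using hF) (by simpa using hG), ?_⟩
  rw [← finSumFinEquiv.surjective.iUnion_comp, iUnion_sum]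
  simp only [finSumFinEquiv_apply_left, finSumFinEquiv_apply_right, Fin.append_left,
    Fin.append_right]

theorem exists_subset_not_finAtomUnion (hA : MeasurableSet A) (hpos : 0 < μ A)
    (hfin : ¬ FinAtomUnion μ A) :
    ∃ T ⊆ A, (MeasurableSet T ∧ 0 < μ T ∧ ¬ FinAtomUnion μ T) ∧ 0 < μ (A \ T) := by
  obtain ⟨B, C, hB, hC, hBC, rfl, hBpos, hCpos⟩ := not_not.1 fun h =>
    hfin (MuAtom.finAtomUnion ⟨hA, hpos, h⟩)
  by_cases hBfin : FinAtomUnion μ B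
  · refine ⟨C, subset_union_right, ⟨hC, hCpos, fun hCfin => hfin (hBfin.union hCfin)⟩, ?_⟩
    rwa [union_sdiff_right, hBC.sdiff_eq_left]
  · refine ⟨B, subset_union_left, ⟨hB, hBpos, hBfin⟩, ?_⟩
    rwa [union_sdiff_left, hBC.symm.sdiff_eq_left]

theorem exists_pairwise_disjoint_of_not_finAtomUnion (hA : MeasurableSet A) (hpos : 0 < μ A)
    (hfin : ¬ FinAtomUnion μ A) :
    ∃ D : ℕ → Set X, Pairwise (Disjoint on D) ∧
      ∀ n, MeasurableSet (D n) ∧ D n ⊆ A ∧ 0 < μ (D n) := by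
  let Bad := {S : Set X // MeasurableSet S ∧ 0 < μ S ∧ ¬ FinAtomUnion μ S}
  choose shrink hsub hbad hdiff using fun S : Bad =>
    exists_subset_not_finAtomUnion S.2.1 S.2.2.1 S.2.2.2
  let S (n : ℕ) : Bad := (fun T => ⟨shrink T, hbad T⟩)^[n] ⟨A, hA, hpos, hfin⟩
  have hsucc (n : ℕ) : (S (n + 1)).1 = shrink (S n) := by
    simp only [S, Function.iterate_succ_apply']
  have hanti : Antitone fun n => (S n).1 :=
    antitone_nat_of_succ_le fun n => (hsucc n).trans_subset (hsub (S n))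
  refine ⟨fun n => (S n).1 \ (S (n + 1)).1, (pairwise_disjoint_on _).2 fun m n hmn => ?_,
    fun n => ⟨(S n).2.1.diff (S (n + 1)).2.1, sdiff_subset.trans (hanti n.zero_le), ?_⟩⟩
  · exact disjoint_sdiff_left.mono_right (sdiff_subset.trans (hanti hmn))
  · simpa only [hsucc] using hdiff (S n)

theorem exists_notMem_linf_of_pairwise_disjoint {D : ℕ → Set X} (hdisj : Pairwise (Disjoint on D))
    (hD : ∀ n, MeasurableSet (D n)) (hDA : ∀ n, D n ⊆ A) (hpos : ∀ n, 0 < μ (D n)) :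
    ∃ f, f ∉ Linf μ A := by
  obtain ⟨f, hf, hfD⟩ := exists_measurable_piecewise D hD (fun n _ => (n : ℝ))
    (fun _ => measurable_const) fun m n hmn x hx => ((hdisj hmn).notMem_of_mem_left hx.1 hx.2).elim
  refine ⟨⟨f, hf⟩, fun hmem => ?_⟩
  obtain ⟨M, hM⟩ := mem_linf_iff.1 hmem
  obtain ⟨n, hn⟩ := exists_nat_gt M
  have hnull : μ (D n) = 0 := by
    rw [measure_eq_zero_iff_ae_notMem]
    filter_upwards [hM] with x hx hxD
    have hle : |f x| ≤ M := hx (hDA n hxD)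
    rw [hfD n hxD, Nat.abs_cast] at hle
    exact hn.not_ge hle
  exact (hpos n).ne' hnull

theorem linf_eq_univ_iff_finAtomUnion (hA : MeasurableSet A) (hpos : 0 < μ A) :
    Linf μ A = univ ↔ FinAtomUnion μ A := by
  refine ⟨fun h => by_contra fun hfin => ?_, fun h => eq_univ_of_forall h.mem_linf⟩
  obtain ⟨D, hdisj, hD⟩ := exists_pairwise_disjoint_of_not_finAtomUnion hA hpos hfin
  obtain ⟨f, hf⟩ := exists_notMem_linf_of_pairwise_disjoint hdisj (fun n => (hD n).1)
    (fun n => (hD n).2.1) fun n => (hD n).2.2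
  exact hf (h ▸ mem_univ f)

theorem mem_fBall_self (hε : 0 < ε) : f ∈ FBall μ f A ε :=
  mem_fBall_iff.2 ⟨0, hε, by simp⟩

theorem mem_fBall_comm : g ∈ FBall μ f A ε ↔ f ∈ FBall μ g A ε := by
  simp only [mem_fBall_iff, abs_sub_comm]

theorem exists_fBall_subset_fBall (hg : g ∈ FBall μ f A ε) :
    ∃ δ > 0, FBall μ g A δ ⊆ FBall μ f A ε := by
  obtain ⟨b, hb, hfg⟩ := mem_fBall_iff.1 hg
  refine ⟨ε - b, sub_pos.2 hb, fun h hh => ?_⟩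
  obtain ⟨c, hc, hgh⟩ := mem_fBall_iff.1 hh
  refine mem_fBall_iff.2 ⟨b + c, by linarith, ?_⟩
  filter_upwards [hfg, hgh] with x hx hx' hxA
  exact (abs_sub_le _ (g.1 x) _).trans (add_le_add (hx hxA) (hx' hxA))

theorem fBall_mem_nhds (hA : MeasurableSet A) (hfin : μ A < ⊤) (hε : 0 < ε) :
    FBall μ f A ε ∈ @nhds _ (FTop μ) f := by
  let := FTop μ
  have hopen : IsOpen (FBall μ f A ε) :=
    TopologicalSpace.isOpen_generateFrom_of_mem ⟨f, A, ε, hA, hfin, hε, rfl⟩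
  exact hopen.mem_nhds (mem_fBall_self hε)

theorem continuous_fTop_iff {Y : Type*} [TopologicalSpace Y] {φ : Y → Mble X} :
    Continuous[_, FTop μ] φ ↔ ∀ y A, MeasurableSet A → μ A < ⊤ → ∀ ε > 0,
      ∀ᶠ z in 𝓝 y, φ z ∈ FBall μ (φ y) A ε := by
  let := FTop μ
  refine ⟨fun h y A hA hfin ε hε => h.continuousAt.eventually (fBall_mem_nhds hA hfin hε),
    fun h => continuous_generateFrom_iff.2 ?_⟩
  rintro _ ⟨f, A, ε, hA, hfin, -, rfl⟩
  refine isOpen_iff_mem_nhds.2 fun y hy => ?_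
  obtain ⟨δ, hδ, hsub⟩ := exists_fBall_subset_fBall hy
  exact (h y A hA hfin δ hδ).mono fun z hz => hsub hz

theorem mem_linf_of_mem_fBall (hf : f ∈ Linf μ A) (hg : g ∈ FBall μ f A ε) : g ∈ Linf μ A := by
  obtain ⟨M, hM⟩ := mem_linf_iff.1 hf
  obtain ⟨b, -, hb⟩ := mem_fBall_iff.1 hg
  refine mem_linf_iff.2 ⟨M + b, ?_⟩
  filter_upwards [hM, hb] with x hxM hxb hxA
  calc |g.1 x| = |f.1 x - (f.1 x - g.1 x)| := by rw [sub_sub_cancel]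
    _ ≤ |f.1 x| + |f.1 x - g.1 x| := abs_sub _ _
    _ ≤ M + b := add_le_add (hxM hxA) (hxb hxA)

theorem isClopen_linf (hA : MeasurableSet A) (hfin : μ A < ⊤) :
    @IsClopen _ (FTop μ) (Linf μ A) := by
  let := FTop μ
  have hball (f : Mble X) : ∀ᶠ g in 𝓝 f, g ∈ FBall μ f A 1 := fBall_mem_nhds hA hfin one_pos
  constructor
  · refine isOpen_compl_iff.1 (isOpen_iff_mem_nhds.2 fun f hf => ?_)
    exact (hball f).mono fun g hg hgA => hf (mem_linf_of_mem_fBall hgA (mem_fBall_comm.1 hg))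
  · exact isOpen_iff_mem_nhds.2 fun f hf =>
      (hball f).mono fun g hg => mem_linf_of_mem_fBall hf hg

theorem linf_eq_univ_of_connectedSpace (hconn : @ConnectedSpace (Mble X) (FTop μ))
    (hA : MeasurableSet A) (hfin : μ A < ⊤) : Linf μ A = univ := by
  let := FTop μ
  exact (isClopen_linf hA hfin).eq_univ ⟨zeroM, mem_linf_iff.2 ⟨0, by simp [zeroM]⟩⟩

/-- The affine parametrization `t ↦ f + t (g - f)` of the line through two measurable functions,
used to join them by a path in `M_F`. -/
def Mble.lineMap (f g : Mble X) (t : ℝ) : Mble X :=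
  ⟨AffineMap.lineMap f.1 g.1 t, ((g.2.sub f.2).const_smul t).add f.2⟩

theorem Mble.lineMap_sub_lineMap (f g : Mble X) (s t : ℝ) (x : X) :
    (lineMap f g s).1 x - (lineMap f g t).1 x = (s - t) * (g.1 x - f.1 x) := by
  simp only [lineMap, AffineMap.lineMap_apply, vsub_eq_sub, vadd_eq_add, Pi.add_apply,
    Pi.smul_apply, Pi.sub_apply, smul_eq_mul]
  ring

theorem Mble.continuous_lineMap
    (h : ∀ A, MeasurableSet A → μ A < ⊤ → ⟨g.1 - f.1, g.2.sub f.2⟩ ∈ Linf μ A) :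
    Continuous[_, FTop μ] (lineMap f g) := by
  refine continuous_fTop_iff.2 fun t A hA hfin ε hε => ?_
  obtain ⟨K, hK⟩ := mem_linf_iff.1 (h A hA hfin)
  have hsmall : ∀ᶠ s in 𝓝 t, |t - s| * K < ε := by
    refine ContinuousAt.eventually_lt (by fun_prop) continuousAt_const ?_
    simpa using hε
  filter_upwards [hsmall] with s hs
  refine mem_fBall_iff.2 ⟨|t - s| * K, hs, ?_⟩
  filter_upwards [hK] with x hx hxA
  rw [lineMap_sub_lineMap, abs_mul]
  exact mul_le_mul_of_nonneg_left (hx hxA) (abs_nonneg _)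

theorem pathConnectedSpace_of_linf_eq_univ
    (h : ∀ A, MeasurableSet A → μ A < ⊤ → Linf μ A = univ) :
    @PathConnectedSpace (Mble X) (FTop μ) := by
  let := FTop μ
  refine ⟨⟨zeroM⟩, fun f g => ⟨⟨⟨fun t => Mble.lineMap f g t, ?_⟩, ?_, ?_⟩⟩⟩
  · exact (Mble.continuous_lineMap fun A hA hfin => h A hA hfin ▸ mem_univ _).comp
      continuous_subtype_val
  · exact Subtype.ext (AffineMap.lineMap_apply_zero f.1 g.1)
  · exact Subtype.ext (AffineMap.lineMap_apply_one f.1 g.1)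

end

theorem stmt6_general {X : Type*} [MeasurableSpace X] (μ : Measure X) :
    List.TFAE [@PathConnectedSpace (Mble X) (FTop μ), @ConnectedSpace (Mble X) (FTop μ),
      ∀ A : Set X, MeasurableSet A → 0 < μ A → μ A < ⊤ → FinAtomUnion μ A] := by
  let := FTop μ
  tfae_have 1 → 2 := fun _ => inferInstance
  tfae_have 2 → 3 := fun hconn A hA hpos hfin =>
    (linf_eq_univ_iff_finAtomUnion hA hpos).1 (linf_eq_univ_of_connectedSpace hconn hA hfin)
  tfae_have 3 → 1 := by
    refine fun hatoms => pathConnectedSpace_of_linf_eq_univ fun A hA hfin => ?_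
    obtain hnull | hpos := eq_zero_or_pos (μ A)
    · exact eq_univ_of_forall (mem_linf_of_measure_eq_zero hnull)
    · exact (linf_eq_univ_iff_finAtomUnion hA hpos).2 (hatoms A hA hpos hfin)
  tfae_finish

/-- `M_F` is path connected iff it is connected iff every `A ∈ 𝒜_>`
is a finite union of `μ`-atoms. -/
theorem stmt6 {X : Type*} [MeasurableSpace X] (μ : Measure X)
    (hpos : 0 < μ Set.univ)
    (hsub : ∀ A : Set X, MeasurableSet A → μ A = ⊤ →
      ∃ B, B ⊆ A ∧ MeasurableSet B ∧ 0 < μ B ∧ μ B < ⊤) :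
    (@PathConnectedSpace (Mble X) (FTop μ) ↔ @ConnectedSpace (Mble X) (FTop μ)) ∧
    (@ConnectedSpace (Mble X) (FTop μ) ↔
      ∀ A : Set X, MeasurableSet A → 0 < μ A → μ A < ⊤ → FinAtomUnion μ A) :=
  ⟨(stmt6_general μ).out 0 1, (stmt6_general μ).out 1 2⟩
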